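/- Let $\Xi > 0$ and $\nu\in\mathbb{R}$ be constants and consider the plate density $\mathcal{H} = \frac{p^2}{2\mu} + \frac{\Xi}{2}\big(w_{[20]}^2 + w_{[02]}^2 + 2\nu w_{[20]}w_{[02]} + 2(1-\nu)w_{[11]}^2\big)$ with constant $\mu>0$. Then for any smooth $w:\mathbb{R}\times B\to\mathbb{R}$, on an edge with normal direction $z^2$ the composed boundary operators of $\mathcal{H}$ with respect to $w$ evaluate to $\delta^{\partial,2}_w\mathcal{H}[w] = \partial^{[02]}_w\mathcal{H}[w] = \Xi\,(\nu w_{[20]} + w_{[02]})$ and $\delta^{\partial,1}_w\mathcal{H}[w] = \partial^{[01]}_w\mathcal{H}[w] - \partial_1\big(\partial^{[11]}_w\mathcal{H}[w]\big) - \partial_2\big(\partial^{[02]}_w\mathcal{H}[w]\big) = -\Xi\,\big(w_{[03]} + (2-\nu)\,w_{[21]}\big)$; i.e., up to the factor $\Xi$, the boundary operators reproduce the negative bending moment $M_1 = -w_{[02]}-\nu w_{[20]}$ (as $\delta^{\partial,2}_w\mathcal{H} = -\Xi M_1$) and the negative effective shear force $Q_1 = w_{[03]}+(2-\nu)w_{[21]}$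 (as $\delta^{\partial,1}_w\mathcal{H} = -\Xi Q_1$) of the Kirchhoff–Love plate. -/

import Mathlib

open MeasureTheory

/-- Time derivative of a field `f(t,z¹,z²)`. -/
noncomputable def pt2 {E : Type*} [NormedAddCommGroup E] [NormedSpace ℝ E]
    (f : ℝ → ℝ → ℝ → E) : ℝ → ℝ → ℝ → E := fun t a b => deriv (fun s => f s a b) t

/-- Derivative `∂₁` with respect to `z¹`. -/
noncomputable def dz1 {E : Type*} [NormedAddCommGroup E] [NormedSpace ℝ E]
    (f : ℝ → ℝ → ℝ → E) : ℝ → ℝ → ℝ → E := fun t a b => deriv (fun s => f t s b) a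

/-- Derivative `∂₂` with respect to `z²`. -/
noncomputable def dz2 {E : Type*} [NormedAddCommGroup E] [NormedSpace ℝ E]
    (f : ℝ → ℝ → ℝ → E) : ℝ → ℝ → ℝ → E := fun t a b => deriv (fun s => f t a s) b

/-- Jet coordinates `(z¹, z², w, p, w_[10], w_[01], w_[20], w_[11], w_[02])`
for the two scalar fields `w` (deflection) and `p` (momentum) of the plate. -/
abbrev PlateJet := ℝ × ℝ × ℝ × ℝ × ℝ × ℝ × ℝ × ℝ × ℝ

/-- The Kirchhoff–Love plate density
`𝓗 = p²/(2μ) + Ξ/2 (w_[20]² + w_[02]² + 2ν w_[20] w_[02] + 2(1-ν) w_[11]²)`. -/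
noncomputable def plateH (μ Ξ : ℝ → ℝ → ℝ) (ν : ℝ) : PlateJet → ℝ :=
  fun q =>
    match q with
    | (z1, z2, _w, p, _w10, _w01, w20, w11, w02) =>
      p ^ 2 / (2 * μ z1 z2)
        + Ξ z1 z2 / 2 * (w20 ^ 2 + w02 ^ 2 + 2 * ν * w20 * w02 + 2 * (1 - ν) * w11 ^ 2)

/-- Second-order jet of the fields `(w, p)` at `(t, z¹, z²)`. -/
noncomputable def jetWP (w p : ℝ → ℝ → ℝ → ℝ) (t a b : ℝ) : PlateJet :=
  (a, b, w t a b, p t a b, dz1 w t a b, dz2 w t a b,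
    dz1 (dz1 w) t a b, dz1 (dz2 w) t a b, dz2 (dz2 w) t a b)

/-- Composed partial derivative of a plate density with respect to one of the jet slots,
selected by the direction `e`. -/
noncomputable def slotP (H : PlateJet → ℝ) (w p : ℝ → ℝ → ℝ → ℝ) (e : PlateJet) :
    ℝ → ℝ → ℝ → ℝ :=
  fun t a b => fderiv ℝ H (jetWP w p t a b) e


/-- First boundary operator `δ^{∂,1}_w H[w]` on an edge with normal direction `z²`:
`∂^[01]_w H[w] - ∂₁(∂^[11]_w H[w]) - ∂₂(∂^[02]_w H[w])`. -/
noncomputable def bdW1 (H : PlateJet → ℝ) (w p : ℝ → ℝ → ℝ → ℝ) : ℝ → ℝ → ℝ → ℝ :=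
  fun t a b =>
    slotP H w p (0, 0, 0, 0, 0, 1, 0, 0, 0) t a b
      - dz1 (slotP H w p (0, 0, 0, 0, 0, 0, 0, 1, 0)) t a b
      - dz2 (slotP H w p (0, 0, 0, 0, 0, 0, 0, 0, 1)) t a b

/-- Second boundary operator `δ^{∂,2}_w H[w] = ∂^[02]_w H[w]`
on an edge with normal direction `z²`. -/
noncomputable def bdW2 (H : PlateJet → ℝ) (w p : ℝ → ℝ → ℝ → ℝ) : ℝ → ℝ → ℝ → ℝ :=
  fun t a b => slotP H w p (0, 0, 0, 0, 0, 0, 0, 0, 1) t a b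

def SmF (f : ℝ → ℝ → ℝ → ℝ) : Prop :=
  ContDiff ℝ (⊤ : ℕ∞) (fun q : ℝ × ℝ × ℝ => f q.1 q.2.1 q.2.2)

lemma SmF.hd {f : ℝ → ℝ → ℝ → ℝ} (hf : SmF f) (x : ℝ × ℝ × ℝ) :
    HasFDerivAt (fun q : ℝ × ℝ × ℝ => f q.1 q.2.1 q.2.2)
      (fderiv ℝ (fun q : ℝ × ℝ × ℝ => f q.1 q.2.1 q.2.2) x) x :=
  ((ContDiff.differentiable hf (by simp)) x).hasFDerivAt

lemma SmF.h1 {f : ℝ → ℝ → ℝ → ℝ} (hf : SmF f) (t a b : ℝ) :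
    HasDerivAt (fun s => f t s b)
      (fderiv ℝ (fun q : ℝ × ℝ × ℝ => f q.1 q.2.1 q.2.2) (t, a, b) (0, 1, 0)) a := by
  have hl : HasDerivAt (fun s : ℝ => ((t, s, b) : ℝ × ℝ × ℝ)) (0, 1, 0) a :=
    (hasDerivAt_const a t).prodMk ((hasDerivAt_id a).prodMk (hasDerivAt_const a b))
  exact HasFDerivAt.comp_hasDerivAt a (hf.hd (t, a, b)) hl

lemma SmF.h2 {f : ℝ → ℝ → ℝ → ℝ} (hf : SmF f) (t a b : ℝ) :
    HasDerivAt (fun s => f t a s)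
      (fderiv ℝ (fun q : ℝ × ℝ × ℝ => f q.1 q.2.1 q.2.2) (t, a, b) (0, 0, 1)) b := by
  have hl : HasDerivAt (fun s : ℝ => ((t, a, s) : ℝ × ℝ × ℝ)) (0, 0, 1) b :=
    (hasDerivAt_const b t).prodMk ((hasDerivAt_const b a).prodMk (hasDerivAt_id b))
  exact HasFDerivAt.comp_hasDerivAt b (hf.hd (t, a, b)) hl

lemma SmF.e1 {f : ℝ → ℝ → ℝ → ℝ} (hf : SmF f) :
    (fun q : ℝ × ℝ × ℝ => dz1 f q.1 q.2.1 q.2.2) =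
      fun q => fderiv ℝ (fun q : ℝ × ℝ × ℝ => f q.1 q.2.1 q.2.2) q (0, 1, 0) := by
  funext q
  exact (hf.h1 q.1 q.2.1 q.2.2).deriv

lemma SmF.e2 {f : ℝ → ℝ → ℝ → ℝ} (hf : SmF f) :
    (fun q : ℝ × ℝ × ℝ => dz2 f q.1 q.2.1 q.2.2) =
      fun q => fderiv ℝ (fun q : ℝ × ℝ × ℝ => f q.1 q.2.1 q.2.2) q (0, 0, 1) := by
  funext q
  exact (hf.h2 q.1 q.2.1 q.2.2).deriv

lemma SmF.fd {f : ℝ → ℝ → ℝ → ℝ} (hf : SmF f) :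
    ContDiff ℝ (⊤ : ℕ∞) (fderiv ℝ (fun q : ℝ × ℝ × ℝ => f q.1 q.2.1 q.2.2)) :=
  ContDiff.fderiv_right hf (by simp)

lemma SmF.d1 {f : ℝ → ℝ → ℝ → ℝ} (hf : SmF f) : SmF (dz1 f) := by
  unfold SmF
  rw [hf.e1]
  exact hf.fd.clm_apply contDiff_const

lemma SmF.d2 {f : ℝ → ℝ → ℝ → ℝ} (hf : SmF f) : SmF (dz2 f) := by
  unfold SmF
  rw [hf.e2]
  exact hf.fd.clm_apply contDiff_const

lemma SmF.hz1 {f : ℝ → ℝ → ℝ → ℝ} (hf : SmF f) (t a b : ℝ) :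
    HasDerivAt (fun s => f t s b) (dz1 f t a b) a :=
  (hf.h1 t a b).differentiableAt.hasDerivAt

lemma SmF.hz2 {f : ℝ → ℝ → ℝ → ℝ} (hf : SmF f) (t a b : ℝ) :
    HasDerivAt (fun s => f t a s) (dz2 f t a b) b :=
  (hf.h2 t a b).differentiableAt.hasDerivAt

lemma SmF.comm {f : ℝ → ℝ → ℝ → ℝ} (hf : SmF f) : dz2 (dz1 f) = dz1 (dz2 f) := by
  funext t a b
  have hsym : IsSymmSndFDerivAt ℝ (fun q : ℝ × ℝ × ℝ => f q.1 q.2.1 q.2.2) (t, a, b) := by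
    apply ContDiffAt.isSymmSndFDerivAt (n := (⊤ : ℕ∞)) (ContDiff.contDiffAt hf)
    simp only [minSmoothness_of_isRCLikeNormedField]
    exact WithTop.coe_le_coe.2 (le_top : (2 : ℕ∞) ≤ ⊤)
  have hd := (hf.fd.differentiable (by simp)) (t, a, b)
  have key : ∀ u v : ℝ × ℝ × ℝ,
      fderiv ℝ (fun q => fderiv ℝ (fun q : ℝ × ℝ × ℝ => f q.1 q.2.1 q.2.2) q u) (t, a, b) v
      = fderiv ℝ (fderiv ℝ (fun q : ℝ × ℝ × ℝ => f q.1 q.2.1 q.2.2)) (t, a, b) v u := by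
    intro u v
    rw [fderiv_clm_apply hd (differentiableAt_const u)]
    simp
  have l : dz2 (dz1 f) t a b = _ := (hf.d1.h2 t a b).deriv
  have r : dz1 (dz2 f) t a b = _ := (hf.d2.h1 t a b).deriv
  rw [l, r, hf.e1, hf.e2, key, key]
  exact hsym _ _

lemma plateH_diff (μ Ξ ν : ℝ) : Differentiable ℝ (plateH (fun _ _ => μ) (fun _ _ => Ξ) ν) := by
  have : plateH (fun _ _ => μ) (fun _ _ => Ξ) ν = fun q : PlateJet =>
      q.2.2.2.1 ^ 2 / (2 * μ)
        + Ξ / 2 * (q.2.2.2.2.2.2.1 ^ 2 + q.2.2.2.2.2.2.2.2 ^ 2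
          + 2 * ν * q.2.2.2.2.2.2.1 * q.2.2.2.2.2.2.2.2
          + 2 * (1 - ν) * q.2.2.2.2.2.2.2.1 ^ 2) := rfl
  rw [this]
  fun_prop

lemma slot_line (μ Ξ ν : ℝ) (q e : PlateJet) (c : ℝ)
    (h : HasDerivAt (fun s : ℝ => plateH (fun _ _ => μ) (fun _ _ => Ξ) ν (q + s • e)) c 0) :
    fderiv ℝ (plateH (fun _ _ => μ) (fun _ _ => Ξ) ν) q e = c :=
  ((plateH_diff μ Ξ ν q).hasFDerivAt.hasLineDerivAt e).unique h

lemma poly_deriv (c k1 k2 : ℝ) (F : ℝ → ℝ) (hF : ∀ s, F s = c + k1 * s + k2 * s ^ 2) :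
    HasDerivAt F k1 0 := by
  have : F = fun s => c + k1 * s + k2 * s ^ 2 := funext hF
  rw [this]
  have h : HasDerivAt (fun s : ℝ => c + k1 * s + k2 * s ^ 2)
      (k1 * 1 + k2 * ((2 : ℕ) * (0 : ℝ) ^ (2 - 1))) 0 :=
    (((hasDerivAt_id' (0:ℝ)).const_mul k1).const_add c).add
      ((hasDerivAt_pow 2 (0:ℝ)).const_mul k2)
  simpa using h

lemma slot01 (μ Ξ ν : ℝ) (w p : ℝ → ℝ → ℝ → ℝ) :
    slotP (plateH (fun _ _ => μ) (fun _ _ => Ξ) ν) w p (0, 0, 0, 0, 0, 1, 0, 0, 0) =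
      fun _ _ _ => 0 := by
  funext t a b
  apply slot_line
  apply poly_deriv (plateH (fun _ _ => μ) (fun _ _ => Ξ) ν (jetWP w p t a b)) 0 0
  intro s
  simp [plateH, jetWP]

lemma slot11 (μ Ξ ν : ℝ) (w p : ℝ → ℝ → ℝ → ℝ) :
    slotP (plateH (fun _ _ => μ) (fun _ _ => Ξ) ν) w p (0, 0, 0, 0, 0, 0, 0, 1, 0) =
      fun t a b => 2 * Ξ * (1 - ν) * dz1 (dz2 w) t a b := by
  funext t a b
  apply slot_line
  apply poly_deriv (plateH (fun _ _ => μ) (fun _ _ => Ξ) ν (jetWP w p t a b)) _ (Ξ * (1 - ν))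
  intro s
  simp [plateH, jetWP]
  ring

lemma slot02 (μ Ξ ν : ℝ) (w p : ℝ → ℝ → ℝ → ℝ) :
    slotP (plateH (fun _ _ => μ) (fun _ _ => Ξ) ν) w p (0, 0, 0, 0, 0, 0, 0, 0, 1) =
      fun t a b => Ξ * (ν * dz1 (dz1 w) t a b + dz2 (dz2 w) t a b) := by
  funext t a b
  apply slot_line
  apply poly_deriv (plateH (fun _ _ => μ) (fun _ _ => Ξ) ν (jetWP w p t a b)) _ (Ξ / 2)
  intro s
  simp [plateH, jetWP]
  ring

/-- on an edge with normal direction `z²`, the boundary operators of the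
constant-coefficient Kirchhoff–Love plate density reproduce (up to the factor `Ξ`) the
negative bending moment `M₁ = -w_[02] - ν w_[20]` and the negative effective shear force
`Q₁ = w_[03] + (2-ν) w_[21]`. -/
theorem statement8 (L1 L2 : ℝ) (hL1 : 0 < L1) (hL2 : 0 < L2)
    (μ Ξ ν : ℝ) (hμ : 0 < μ) (hΞ : 0 < Ξ)
    (w p : ℝ → ℝ → ℝ → ℝ)
    (hw : ContDiff ℝ (⊤ : ℕ∞) (fun q : ℝ × ℝ × ℝ => w q.1 q.2.1 q.2.2)) :
    ∀ t : ℝ, ∀ a ∈ Set.Icc (0:ℝ) L1, ∀ b ∈ ({0, L2} : Set ℝ),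
      (bdW2 (plateH (fun _ _ => μ) (fun _ _ => Ξ) ν) w p t a b =
          Ξ * (ν * dz1 (dz1 w) t a b + dz2 (dz2 w) t a b)
        ∧ bdW2 (plateH (fun _ _ => μ) (fun _ _ => Ξ) ν) w p t a b =
            -Ξ * (-dz2 (dz2 w) t a b - ν * dz1 (dz1 w) t a b))
      ∧
      (bdW1 (plateH (fun _ _ => μ) (fun _ _ => Ξ) ν) w p t a b =
          -Ξ * (dz2 (dz2 (dz2 w)) t a b + (2 - ν) * dz1 (dz1 (dz2 w)) t a b)
        ∧ bdW1 (plateH (fun _ _ => μ) (fun _ _ => Ξ) ν) w p t a b =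
            -Ξ * (dz2 (dz2 (dz2 w)) t a b + (2 - ν) * dz1 (dz1 (dz2 w)) t a b)) := by
  intro t a _ b _
  have hs : SmF w := hw
  have h2 : bdW2 (plateH (fun _ _ => μ) (fun _ _ => Ξ) ν) w p t a b =
      Ξ * (ν * dz1 (dz1 w) t a b + dz2 (dz2 w) t a b) := by
    unfold bdW2
    rw [slot02]
  have h1 : bdW1 (plateH (fun _ _ => μ) (fun _ _ => Ξ) ν) w p t a b =
      -Ξ * (dz2 (dz2 (dz2 w)) t a b + (2 - ν) * dz1 (dz1 (dz2 w)) t a b) := by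
    unfold bdW1
    rw [slot01, slot11, slot02]
    have ea : dz1 (fun t a b => 2 * Ξ * (1 - ν) * dz1 (dz2 w) t a b) t a b
        = 2 * Ξ * (1 - ν) * dz1 (dz1 (dz2 w)) t a b :=
      ((hs.d2.d1.hz1 t a b).const_mul _).deriv
    have eb : dz2 (fun t a b => Ξ * (ν * dz1 (dz1 w) t a b + dz2 (dz2 w) t a b)) t a b
        = Ξ * (ν * dz2 (dz1 (dz1 w)) t a b + dz2 (dz2 (dz2 w)) t a b) :=
      ((((hs.d1.d1.hz2 t a b).const_mul ν).add (hs.d2.d2.hz2 t a b)).const_mul Ξ).deriv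
    rw [ea, eb, hs.d1.comm, hs.comm]
    ring
  refine ⟨⟨h2, ?_⟩, h1, h1⟩
  rw [h2]
  ring
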